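/- arXiv:1804.07673 — 2 statements merged into one kernel-verified Lean document; each statement's English description precedes it below -/
import Mathlib

section
/- Assume that every 3-uniform hypergraph on 8 vertices with b(8) = 48 edges not containing the Fano plane is isomorphic to B_8. Let n ≥ 9 be odd and let H be a 3-uniform hypergraph on n vertices with b(n) edges not containing the Fano plane. Suppose that whenever a 4-element set K of vertices induces a tetrahedron in H (all four 3-element subsets of K are edges), (i) the induced subhypergraph of H on V ∖ K is isomorphic to B_{n−4}, and (ii) every vertex v outside K lies in exactly 5 edges of H that contain v together with two vertices of K. Then H is isomorphic to B_n. -/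
/-- A `3`-uniform hypergraph (given by its edge set `E`) contains the Fano plane if
there are seven distinct vertices `v 0, …, v 6` such that the seven triples below
(the lines of the projective plane over `GF(2)`) are all edges. -/
def ContainsFano {α : Type*} [DecidableEq α] (E : Finset (Finset α)) : Prop :=
  ∃ v : Fin 7 → α, Function.Injective v ∧
    ({v 0, v 1, v 2} : Finset α) ∈ E ∧ ({v 2, v 3, v 4} : Finset α) ∈ E ∧
    ({v 0, v 4, v 5} : Finset α) ∈ E ∧ ({v 0, v 3, v 6} : Finset α) ∈ E ∧
    ({v 2, v 5, v 6} : Finset α) ∈ E ∧ ({v 1, v 4, v 6} : Finset α) ∈ E ∧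
    ({v 1, v 3, v 5} : Finset α) ∈ E

/-- `b n = C(n,3) − C(⌊n/2⌋,3) − C(⌈n/2⌉,3)`, the number of edges of the balanced,
complete, bipartite `3`-uniform hypergraph on `n` vertices. -/
def b (n : ℕ) : ℕ := n.choose 3 - (n / 2).choose 3 - ((n + 1) / 2).choose 3

/-!
Since `4 * b n > 3 * C(n,3)`, averaging over four-element sets yields a tetrahedron `K`; let `X`
and `Y` be the classes of the balanced bipartite hypergraph on its complement. For two vertices of
`X` and two of `Y`, the set `L` they form is again a tetrahedron, and `K ∪ L` spans
`4 + 4 * 5 + 4 * 5 + 4 = 48` edges, hence a copy of `B_8`, which splits both `K` and `L` evenly.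

Colour every vertex outside `K` by the pair of vertices of `K` in its own class. Exactly two colours
occur on each such `L`, each of them twice. As `X` or `Y` has at least three vertices, this forces
`X` and `Y` to be monochromatic, with different colours: if, say, `Y` contained two colours, then
`X` would be coloured injectively with these two. So the copies of `B_8` all split `K` in the same
way and, since an edge meeting `K` lies in some `K ∪ L`, they glue to the required bipartition.
-/

section

open Finset

theorem six_mul_add_two_choose_three (a : ℕ) :
    6 * (a + 2).choose 3 = (a + 2) * (a + 1) * a := by
  have h : a * ((a + 1) * ((a + 2) * 1)) = 6 * (a + 2).choose 3 :=
    Nat.descFactorial_eq_factorial_mul_choose (a + 2) 3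
  rw [← h]
  ring

theorem four_mul_choose_half_add_lt {n : ℕ} (hn : 4 ≤ n) :
    4 * ((n / 2).choose 3 + ((n + 1) / 2).choose 3) < n.choose 3 := by
  obtain ⟨k, rfl | rfl⟩ := n.even_or_odd'
  · obtain ⟨j, rfl⟩ : ∃ j, k = j + 2 := ⟨k - 2, by omega⟩
    rw [show 2 * (j + 2) / 2 = j + 2 by omega, show (2 * (j + 2) + 1) / 2 = j + 2 by omega,
      show 2 * (j + 2) = (2 * j + 2) + 2 by omega]
    have := six_mul_add_two_choose_three j
    have := six_mul_add_two_choose_three (2 * j + 2)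
    nlinarith
  · obtain ⟨j, rfl⟩ : ∃ j, k = j + 2 := ⟨k - 2, by omega⟩
    rw [show (2 * (j + 2) + 1) / 2 = j + 2 by omega,
      show (2 * (j + 2) + 1 + 1) / 2 = (j + 1) + 2 by omega,
      show 2 * (j + 2) + 1 = (2 * j + 3) + 2 by omega]
    have := six_mul_add_two_choose_three j
    have := six_mul_add_two_choose_three (j + 1)
    have := six_mul_add_two_choose_three (2 * j + 3)
    nlinarith

theorem three_mul_choose_three_lt_four_mul_b {n : ℕ} (hn : 4 ≤ n) :
    3 * n.choose 3 < 4 * b n := by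
  have := four_mul_choose_half_add_lt hn
  unfold b
  omega

theorem exists_forall_subset_mem_of_mul_choose_lt {α : Type*} [Fintype α] {E : Finset (Finset α)}
    {r : ℕ} (hr : r < Fintype.card α)
    (hE : ∀ e ∈ E, #e = r) (hlt : r * (Fintype.card α).choose r < (r + 1) * #E) :
    ∃ K : Finset α, #K = r + 1 ∧ ∀ e ⊆ K, #e = r → e ∈ E := by
  classical
  by_contra! hcon
  have double_count :
      #E * (Fintype.card α - r) ≤ #(powersetCard (r + 1) (univ : Finset α)) * r := by
    refine card_mul_le_card_mul (· ⊆ ·) (fun e he => ?_) (fun K hK => ?_)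
    · have hsub : eᶜ.image (insert · e) ⊆
          bipartiteAbove (· ⊆ ·) (powersetCard (r + 1) univ) e := by
        intro K hK
        obtain ⟨v, hv, rfl⟩ := mem_image.1 hK
        simp [mem_bipartiteAbove, card_insert_of_notMem (mem_compl.1 hv), hE e he]
      calc Fintype.card α - r = #(eᶜ.image (insert · e)) := by
            rw [card_image_of_injOn (by simpa using insert_inj_on e), card_compl, hE e he]
        _ ≤ _ := card_le_card hsub
    · have hK : #K = r + 1 := (mem_powersetCard.1 hK).2
      have hsub : bipartiteBelow (· ⊆ ·) E K ⊂ powersetCard r K := by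
        obtain ⟨e, heK, her, heE⟩ := hcon K hK
        refine (ssubset_iff_of_subset fun f hf => ?_).2
          ⟨e, mem_powersetCard.2 ⟨heK, her⟩, fun h => heE (mem_filter.1 h).1⟩
        exact mem_powersetCard.2 ⟨(mem_filter.1 hf).2, hE f (mem_filter.1 hf).1⟩
      have := card_lt_card hsub
      rw [card_powersetCard, hK, Nat.choose_succ_self_right] at this
      omega
  rw [card_powersetCard, card_univ] at double_count
  have hchoose := Nat.choose_succ_right_eq (Fintype.card α) r
  have hpos : 0 < Fintype.card α - r := by omega
  nlinarith

variable {α : Type*} [DecidableEq α] {E : Finset (Finset α)} {K L X Y A B : Finset α}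

theorem card_inter_add_card_inter_of_subset_union {e : Finset α} (hXY : Disjoint X Y)
    (he : e ⊆ X ∪ Y) : #(e ∩ X) + #(e ∩ Y) = #e := by
  rw [← card_union_of_disjoint (hXY.mono inter_subset_right inter_subset_right),
    ← inter_union_distrib_left, inter_eq_left.2 he]

/-- The four-element set `K` spans a tetrahedron in the hypergraph with edge set `E`. -/
def IsTetrahedron (E : Finset (Finset α)) (K : Finset α) : Prop :=
  #K = 4 ∧ ∀ e ⊆ K, #e = 3 → e ∈ E

/-- The hypergraph with edge set `E` induces on `X ∪ Y` the complete bipartite `3`-uniform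
hypergraph with vertex classes `X` and `Y`. -/
structure IsCompleteBipartite (E : Finset (Finset α)) (X Y : Finset α) : Prop where
  disjoint : Disjoint X Y
  mem_iff : ∀ e : Finset α, #e = 3 → e ⊆ X ∪ Y → (e ∈ E ↔ (e ∩ X).Nonempty ∧ (e ∩ Y).Nonempty)

/-- The hypergraph with edge set `E` induces on `S` a copy of the balanced, complete, bipartite
hypergraph `B_m`, where `m = #S`. -/
def IsBalancedBipartiteOn (E : Finset (Finset α)) (S : Finset α) : Prop :=
  ∃ X Y : Finset α, IsCompleteBipartite E X Y ∧ X ∪ Y = S ∧ ((#X : ℤ) - (#Y : ℤ)).natAbs ≤ 1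

theorem isBalancedBipartiteOn_iff {S : Finset α} :
    IsBalancedBipartiteOn E S ↔ ∃ X Y : Finset α, Disjoint X Y ∧ X ∪ Y = S ∧
      ((#X : ℤ) - (#Y : ℤ)).natAbs ≤ 1 ∧
      ∀ e : Finset α, #e = 3 → e ⊆ S → (e ∈ E ↔ (e ∩ X).Nonempty ∧ (e ∩ Y).Nonempty) := by
  constructor
  · rintro ⟨X, Y, h, rfl, hbal⟩
    exact ⟨X, Y, h.disjoint, rfl, hbal, h.mem_iff⟩
  · rintro ⟨X, Y, hXY, rfl, hbal, h⟩
    exact ⟨X, Y, ⟨hXY, h⟩, rfl, hbal⟩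

theorem isBalancedBipartiteOn_univ [Fintype α] :
    IsBalancedBipartiteOn E univ ↔ ∃ X Y : Finset α, Disjoint X Y ∧ X ∪ Y = univ ∧
      ((#X : ℤ) - (#Y : ℤ)).natAbs ≤ 1 ∧
      ∀ e : Finset α, #e = 3 → (e ∈ E ↔ (e ∩ X).Nonempty ∧ (e ∩ Y).Nonempty) := by
  simp only [isBalancedBipartiteOn_iff, subset_univ, true_imp_iff]

namespace IsCompleteBipartite

theorem symm (h : IsCompleteBipartite E X Y) : IsCompleteBipartite E Y X :=
  ⟨h.disjoint.symm, fun e he hs => by rw [h.mem_iff e he (union_comm X Y ▸ hs), and_comm]⟩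

theorem card_inter_left_le_two (h : IsCompleteBipartite E X Y) (hL : IsTetrahedron E L) :
    #(L ∩ X) ≤ 2 := by
  by_contra! hcard
  obtain ⟨e, he, he3⟩ := exists_subset_card_eq hcard
  have heX : e ⊆ X := he.trans inter_subset_right
  have meets_Y := ((h.mem_iff e he3 (heX.trans subset_union_left)).1
    (hL.2 e (he.trans inter_subset_left) he3)).2
  exact not_disjoint_iff_nonempty_inter.2 meets_Y (h.disjoint.mono_left heX)

theorem isTetrahedron_iff (h : IsCompleteBipartite E X Y) (hL : L ⊆ X ∪ Y) :
    IsTetrahedron E L ↔ #(L ∩ X) = 2 ∧ #(L ∩ Y) = 2 := by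
  have hsum := card_inter_add_card_inter_of_subset_union h.disjoint hL
  constructor
  · intro hT
    have := hT.1
    have := h.card_inter_left_le_two hT
    have := h.symm.card_inter_left_le_two hT
    omega
  · rintro ⟨hX, hY⟩
    refine ⟨by omega, fun e he he3 => (h.mem_iff e he3 (he.trans hL)).2 ?_⟩
    have := card_inter_add_card_inter_of_subset_union h.disjoint (he.trans hL)
    have := card_le_card (inter_subset_inter_right (u := X) he)
    have := card_le_card (inter_subset_inter_right (u := Y) he)
    exact ⟨card_pos.1 (by omega), card_pos.1 (by omega)⟩

end IsCompleteBipartite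

section CountEdges

variable (h3 : ∀ e ∈ E, #e = 3) (hKL : Disjoint K L)
include h3 hKL

theorem card_filter_card_inter_eq_two {d : ℕ}
    (hdeg : ∀ v ∈ L, #{e ∈ E | v ∈ e ∧ #(e ∩ K) = 2} = d) :
    #{e ∈ E | e ⊆ K ∪ L ∧ #(e ∩ K) = 2} = #L * d := by
  set F : Finset (Finset α) := {e ∈ E | e ⊆ K ∪ L ∧ #(e ∩ K) = 2} with hFdef
  have card_inter_L : ∀ e ∈ F, #(L ∩ e) = 1 := by
    intro e he
    obtain ⟨heE, hes, heK⟩ := mem_filter.1 he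
    have := card_inter_add_card_inter_of_subset_union hKL hes
    have := h3 e heE
    rw [inter_comm]
    omega
  have filter_F : ∀ v ∈ L, #{e ∈ F | v ∈ e} = d := by
    intro v hv
    rw [← hdeg v hv, hFdef, filter_filter]
    congr 1
    refine filter_congr fun e he => ⟨fun h => ⟨h.2, h.1.2⟩, fun ⟨hve, heK⟩ => ⟨⟨?_, heK⟩, hve⟩⟩
    have hvK : v ∉ e ∩ K := fun h => disjoint_right.1 hKL hv (mem_inter.1 h).2
    have e_eq : insert v (e ∩ K) = e := eq_of_subset_of_card_le
      (insert_subset hve inter_subset_left) (by rw [card_insert_of_notMem hvK, h3 e he, heK])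
    rw [← e_eq]
    exact insert_subset (mem_union_right _ hv) (inter_subset_right.trans subset_union_left)
  rw [← sum_card_inter filter_F, sum_congr rfl card_inter_L, card_eq_sum_ones]

omit hKL in
theorem filter_card_inter_eq_three (hK : IsTetrahedron E K) :
    {e ∈ E | e ⊆ K ∪ L ∧ #(e ∩ K) = 3} = powersetCard 3 K := by
  ext e
  rw [mem_filter, mem_powersetCard]
  constructor
  · rintro ⟨heE, -, heK⟩
    exact ⟨inter_eq_left.1 (eq_of_subset_of_card_le inter_subset_left (by rw [heK, h3 e heE])),
      h3 e heE⟩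
  · rintro ⟨heK, he3⟩
    exact ⟨hK.2 e heK he3, heK.trans subset_union_left, by rwa [inter_eq_left.2 heK]⟩

theorem card_filter_two_le_card_inter (hK : IsTetrahedron E K) (hL : #L = 4)
    (hdeg : ∀ v ∈ L, #{e ∈ E | v ∈ e ∧ #(e ∩ K) = 2} = 5) :
    #{e ∈ E | e ⊆ K ∪ L ∧ 2 ≤ #(e ∩ K)} = 24 := by
  have split : {e ∈ E | e ⊆ K ∪ L ∧ 2 ≤ #(e ∩ K)} =
      {e ∈ E | e ⊆ K ∪ L ∧ #(e ∩ K) = 2} ∪ {e ∈ E | e ⊆ K ∪ L ∧ #(e ∩ K) = 3} := by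
    rw [← filter_or]
    refine filter_congr fun e he => ?_
    have := card_le_card (inter_subset_left (s₁ := e) (s₂ := K))
    have := h3 e he
    rw [← and_or_left]
    refine and_congr_right fun _ => by omega
  rw [split, card_union_of_disjoint (disjoint_filter.2 fun _ _ _ _ => by omega),
    card_filter_card_inter_eq_two h3 hKL hdeg, filter_card_inter_eq_three h3 hK,
    card_powersetCard, hK.1, hL]
  rfl

theorem card_filter_subset_union (hK : IsTetrahedron E K) (hL : IsTetrahedron E L)
    (hdegK : ∀ v ∈ L, #{e ∈ E | v ∈ e ∧ #(e ∩ K) = 2} = 5)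
    (hdegL : ∀ v ∈ K, #{e ∈ E | v ∈ e ∧ #(e ∩ L) = 2} = 5) :
    #{e ∈ E | e ⊆ K ∪ L} = 48 := by
  have one_or_other : {e ∈ E | e ⊆ K ∪ L ∧ ¬ 2 ≤ #(e ∩ K)} =
      {e ∈ E | e ⊆ L ∪ K ∧ 2 ≤ #(e ∩ L)} := by
    refine filter_congr fun e he => ?_
    rw [union_comm L K]
    refine and_congr_right fun hes => ?_
    have := card_inter_add_card_inter_of_subset_union hKL hes
    have := h3 e he
    omega
  rw [← card_filter_add_card_filter_not (fun e => 2 ≤ #(e ∩ K)), filter_filter, filter_filter,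
    one_or_other, card_filter_two_le_card_inter h3 hKL hK hL.1 hdegK,
    card_filter_two_le_card_inter h3 hKL.symm hL hK.1 hdegL]

end CountEdges

section Pullback

variable {β : Type*} {f : β ↪ α}

/-- The pullback of the hypergraph with edge set `E` along `f`. -/
noncomputable def pullback (f : β ↪ α) (E : Finset (Finset α)) : Finset (Finset β) :=
  E.preimage (Finset.map f) (map_injective f).injOn

omit [DecidableEq α] in
theorem mem_pullback {s : Finset β} : s ∈ pullback f E ↔ s.map f ∈ E :=
  mem_preimage

theorem card_pullback [Fintype β] : #(pullback f E) = #{e ∈ E | e ⊆ univ.map f} := by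
  classical
  rw [pullback, card_preimage]
  congr 1
  refine filter_congr fun e _ => ?_
  simp [subset_map_iff, eq_comm]

theorem ContainsFano.of_pullback [DecidableEq β] (h : ContainsFano (pullback f E)) :
    ContainsFano E := by
  obtain ⟨v, hv, hlines⟩ := h
  simp only [mem_pullback, map_insert, map_singleton] at hlines
  exact ⟨f ∘ v, f.injective.comp hv, hlines⟩

theorem IsCompleteBipartite.map_of_pullback [DecidableEq β] {X Y : Finset β}
    (h : IsCompleteBipartite (pullback f E) X Y) :
    IsCompleteBipartite E (X.map f) (Y.map f) := by
  refine ⟨(disjoint_map f).2 h.disjoint, fun e he hes => ?_⟩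
  rw [← map_union] at hes
  obtain ⟨s, hs, rfl⟩ := subset_map_iff.1 hes
  rw [← mem_pullback, h.mem_iff s (by rwa [card_map] at he) hs, ← map_inter, ← map_inter,
    map_nonempty, map_nonempty]

end Pullback

theorem exists_embedding_map_univ_eq {α : Type*} {S : Finset α} {m : ℕ} (hS : #S = m) :
    ∃ f : Fin m ↪ α, univ.map f = S :=
  ⟨(S.equivFinOfCardEq hS).symm.toEmbedding.trans (.subtype _), by
    rw [← map_map, map_univ_equiv, univ_eq_attach, attach_map_val]⟩

section Eight

variable (h8 : ∀ F : Finset (Finset (Fin 8)), (∀ e ∈ F, #e = 3) → #F = b 8 → ¬ ContainsFano F →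
  IsBalancedBipartiteOn F univ)
  (h3 : ∀ e ∈ E, #e = 3) (hF : ¬ ContainsFano E)
include h8 h3 hF

theorem exists_isCompleteBipartite_of_card_eq_eight {S : Finset α} (hS : #S = 8)
    (hcard : #{e ∈ E | e ⊆ S} = b 8) :
    ∃ A B, IsCompleteBipartite E A B ∧ A ∪ B = S := by
  obtain ⟨f, rfl⟩ := exists_embedding_map_univ_eq hS
  obtain ⟨A, B, hAB, hu, -⟩ := h8 (pullback f E)
    (fun e he => by simpa using h3 _ (mem_pullback.1 he)) (by rw [card_pullback, hcard])
    (fun h => hF h.of_pullback)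
  exact ⟨A.map f, B.map f, hAB.map_of_pullback, by rw [← map_union, hu]⟩

theorem exists_isCompleteBipartite_union
    (hdeg : ∀ J, IsTetrahedron E J → ∀ v ∉ J, #{e ∈ E | v ∈ e ∧ #(e ∩ J) = 2} = 5)
    (hK : IsTetrahedron E K) (hL : IsTetrahedron E L) (hKL : Disjoint K L) :
    ∃ A B, IsCompleteBipartite E A B ∧ A ∪ B = K ∪ L := by
  refine exists_isCompleteBipartite_of_card_eq_eight h8 h3 hF
    (by rw [card_union_of_disjoint hKL, hK.1, hL.1]) ?_
  rw [card_filter_subset_union h3 hKL hK hL (fun v hv => hdeg K hK v (disjoint_right.1 hKL hv))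
    (fun v hv => hdeg L hL v (disjoint_left.1 hKL hv))]
  rfl

end Eight

/-- The vertices of `K` that lie in a pair of `K` forming a non-edge together with `v`. If `K` is a
tetrahedron inside a complete bipartite hypergraph and `v` is a vertex outside `K`, these are the
two vertices of `K` in the class of `v`. -/
def sameSide (E : Finset (Finset α)) (K : Finset α) (v : α) : Finset α :=
  {k ∈ K | ∃ k' ∈ K, k' ≠ k ∧ {v, k, k'} ∉ E}

namespace IsCompleteBipartite

theorem sameSide_eq_inter_left (h : IsCompleteBipartite E A B) (hK : IsTetrahedron E K)
    (hKs : K ⊆ A ∪ B) {v : α} (hvA : v ∈ A) (hvK : v ∉ K) : sameSide E K v = K ∩ A := by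
  have mem_iff : ∀ k ∈ K, ∀ k' ∈ K, k' ≠ k → ({v, k, k'} ∈ E ↔ k ∈ B ∨ k' ∈ B) := by
    intro k hk k' hk' hne
    have card_triple : #{v, k, k'} = 3 :=
      card_eq_three.2 ⟨v, k, k', by grind, by grind, hne.symm, rfl⟩
    have hvB : v ∉ B := disjoint_left.1 h.disjoint hvA
    rw [h.mem_iff _ card_triple (by grind), and_iff_right ⟨v, by simp [hvA]⟩]
    simp only [Finset.Nonempty, mem_inter, mem_insert, mem_singleton]
    grind
  ext k
  rw [sameSide, mem_filter, mem_inter]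
  refine and_congr_right fun hk => ⟨?_, fun hkA => ?_⟩
  · rintro ⟨k', hk', hne, hnot⟩
    rw [mem_iff k hk k' hk' hne, not_or] at hnot
    exact (mem_union.1 (hKs hk)).resolve_right hnot.1
  · have two : 1 < #(K ∩ A) := by rw [((h.isTetrahedron_iff hKs).1 hK).1]; decide
    obtain ⟨k', hk', hne⟩ := exists_mem_ne two k
    obtain ⟨hk'K, hk'A⟩ := mem_inter.1 hk'
    refine ⟨k', hk'K, hne, ?_⟩
    rw [mem_iff k hk k' hk'K hne, not_or]
    exact ⟨disjoint_left.1 h.disjoint hkA, disjoint_left.1 h.disjoint hk'A⟩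

theorem sameSide_eq_inter_left_iff (h : IsCompleteBipartite E A B) (hK : IsTetrahedron E K)
    (hKs : K ⊆ A ∪ B) {v : α} (hv : v ∈ A ∪ B) (hvK : v ∉ K) :
    sameSide E K v = K ∩ A ↔ v ∈ A := by
  refine ⟨fun heq => ?_, fun hvA => h.sameSide_eq_inter_left hK hKs hvA hvK⟩
  by_contra hvA
  have hvB : v ∈ B := (mem_union.1 hv).resolve_left hvA
  rw [h.symm.sameSide_eq_inter_left hK (union_comm A B ▸ hKs) hvB hvK] at heq
  obtain ⟨k, hk⟩ := card_pos.1 (((h.isTetrahedron_iff hKs).1 hK).2.symm ▸ two_pos : 0 < #(K ∩ B))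
  have hkA := heq ▸ hk
  exact disjoint_left.1 h.disjoint (mem_inter.1 hkA).2 (mem_inter.1 hk).2

end IsCompleteBipartite

theorem isCompleteBipartite_sameSide_union (hK : IsTetrahedron E K) (hL : IsTetrahedron E L)
    (hKL : Disjoint K L) (hsplit : ∃ A B, IsCompleteBipartite E A B ∧ A ∪ B = K ∪ L)
    {a : α} (ha : a ∈ L) :
    #(sameSide E K a) = 2 ∧ #{v ∈ L | sameSide E K v = sameSide E K a} = 2 ∧
      IsCompleteBipartite E (sameSide E K a ∪ {v ∈ L | sameSide E K v = sameSide E K a})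
        (K \ sameSide E K a ∪ {v ∈ L | sameSide E K v ≠ sameSide E K a}) := by
  obtain ⟨A, B, hAB, hu, haA⟩ : ∃ A B, IsCompleteBipartite E A B ∧ A ∪ B = K ∪ L ∧ a ∈ A := by
    obtain ⟨A, B, hAB, hu⟩ := hsplit
    rcases mem_union.1 (hu ▸ mem_union_right K ha : a ∈ A ∪ B) with h | h
    · exact ⟨A, B, hAB, hu, h⟩
    · exact ⟨B, A, hAB.symm, union_comm A B ▸ hu, h⟩
  have hKs : K ⊆ A ∪ B := hu ▸ subset_union_left
  have hLs : L ⊆ A ∪ B := hu ▸ subset_union_right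
  have side_iff : ∀ v ∈ L, (sameSide E K v = K ∩ A ↔ v ∈ A) := fun v hv =>
    hAB.sameSide_eq_inter_left_iff hK hKs (hLs hv) (disjoint_right.1 hKL hv)
  have filter_eq : {v ∈ L | sameSide E K v = K ∩ A} = L ∩ A := by
    rw [filter_congr side_iff, filter_mem_eq_inter]
  have filter_ne : {v ∈ L | sameSide E K v ≠ K ∩ A} = L ∩ B := by
    ext v
    have := @hLs v
    have : v ∈ A → v ∉ B := fun h => disjoint_left.1 hAB.disjoint h
    grind
  rw [(side_iff a ha).2 haA, filter_eq, filter_ne]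
  refine ⟨((hAB.isTetrahedron_iff hKs).1 hK).1, ((hAB.isTetrahedron_iff hLs).1 hL).1, ?_⟩
  have A_eq : K ∩ A ∪ L ∩ A = A := by
    rw [← union_inter_distrib_right, ← hu, inter_eq_right.2 subset_union_left]
  have B_eq : K \ (K ∩ A) ∪ L ∩ B = B := by
    ext v
    have := @hKs v
    have : v ∈ A → v ∉ B := fun h => disjoint_left.1 hAB.disjoint h
    have : v ∈ A ∪ B ↔ v ∈ K ∪ L := by rw [hu]
    grind
  rwa [A_eq, B_eq]

section Colouring

variable {κ : Type*} [DecidableEq κ] {c : α → κ}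

theorem colours_of_card_filter_eq_two {x x' y y' : α} (hnd : [x, x', y, y'].Nodup)
    (h : ∀ a ∈ ({x, x', y, y'} : Finset α), #{v ∈ ({x, x', y, y'} : Finset α) | c v = c a} = 2) :
    (c x = c x' ∧ c y = c y' ∧ c x ≠ c y) ∨
      (c x ≠ c x' ∧ c y ≠ c y' ∧ (c x = c y ∨ c x = c y')) := by
  have count : ∀ k, #{v ∈ ({x, x', y, y'} : Finset α) | c v = k} =
      (if c x = k then 1 else 0) + (if c x' = k then 1 else 0) + (if c y = k then 1 else 0) +
        (if c y' = k then 1 else 0) := by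
    intro k
    rw [card_filter, sum_insert (by grind), sum_insert (by grind), sum_pair (by grind)]
    ring
  have hx := (count _).symm.trans (h x (by simp))
  have hy := (count _).symm.trans (h y (by simp))
  grind

variable (h : ∀ S ⊆ X, #S = 2 → ∀ T ⊆ Y, #T = 2 → ∀ a ∈ S ∪ T, #{v ∈ S ∪ T | c v = c a} = 2)
  (hXY : Disjoint X Y)
include h hXY

theorem colours_of_forall_card_filter_eq_two {x x' y y' : α} (hx : x ∈ X) (hx' : x' ∈ X)
    (hy : y ∈ Y) (hy' : y' ∈ Y) (hxx' : x ≠ x') (hyy' : y ≠ y') :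
    (c x = c x' ∧ c y = c y' ∧ c x ≠ c y) ∨
      (c x ≠ c x' ∧ c y ≠ c y' ∧ (c x = c y ∨ c x = c y')) := by
  have ne : ∀ u ∈ X, ∀ w ∈ Y, u ≠ w := disjoint_iff_ne.1 hXY
  have hquad := h {x, x'} (insert_subset hx (singleton_subset_iff.2 hx')) (card_pair hxx')
    {y, y'} (insert_subset hy (singleton_subset_iff.2 hy')) (card_pair hyy')
  exact colours_of_card_filter_eq_two (by grind)
    (by simpa only [insert_union, singleton_union] using hquad)

theorem colour_eq_of_three_le_card (hX : 3 ≤ #X) {y y' : α} (hy : y ∈ Y) (hy' : y' ∈ Y) :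
    c y = c y' := by
  by_contra hne
  have hyy' : y ≠ y' := fun heq => hne (congrArg c heq)
  have quad : ∀ x ∈ X, ∀ x' ∈ X, x ≠ x' → c x ≠ c x' ∧ (c x = c y ∨ c x = c y') := by
    intro x hx x' hx' hxx'
    have := colours_of_forall_card_filter_eq_two h hXY hx hx' hy hy' hxx' hyy'
    tauto
  have maps : Set.MapsTo c X ({c y, c y'} : Finset κ) := fun x hx => by
    obtain ⟨x', hx', hxx'⟩ := exists_mem_ne (by omega : 1 < #X) x
    simpa using (quad x hx x' hx' hxx'.symm).2
  have inj : Set.InjOn c X := fun x hx x' hx' heq => by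
    by_contra hxx'
    exact (quad x hx x' hx' hxx').1 heq
  have := card_le_card_of_injOn c maps inj
  have := card_le_two (a := c y) (b := c y')
  omega

theorem colours_of_five_le_card (hcard : 5 ≤ #X + #Y) {x x' y y' : α} (hx : x ∈ X)
    (hx' : x' ∈ X) (hy : y ∈ Y) (hy' : y' ∈ Y) (hxx' : x ≠ x') (hyy' : y ≠ y') :
    c x = c x' ∧ c y = c y' ∧ c x ≠ c y := by
  refine (colours_of_forall_card_filter_eq_two h hXY hx hx' hy hy' hxx' hyy').resolve_right ?_
  rintro ⟨hcx, hcy, -⟩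
  rcases (by omega : 3 ≤ #X ∨ 3 ≤ #Y) with hX | hY
  · exact hcy (colour_eq_of_three_le_card h hXY hX hy hy')
  · exact hcx (colour_eq_of_three_le_card (fun T hT hT2 S hS hS2 => by
      simpa only [union_comm] using h S hS hS2 T hT hT2) hXY.symm hY hx hx')

theorem colour_eq_iff_mem (hX : 2 ≤ #X) (hY : 2 ≤ #Y) (hcard : 5 ≤ #X + #Y) {x v : α}
    (hx : x ∈ X) (hv : v ∈ X ∪ Y) : c v = c x ↔ v ∈ X := by
  by_cases hvX : v ∈ X
  · obtain rfl | hvx := eq_or_ne v x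
    · simp [hvX]
    · obtain ⟨y, hy, y', hy', hyy'⟩ := one_lt_card.1 hY
      simpa [hvX] using (colours_of_five_le_card h hXY hcard hvX hx hy hy' hvx hyy').1
  · have hvY : v ∈ Y := (mem_union.1 hv).resolve_left hvX
    obtain ⟨x', hx', hx'x⟩ := exists_mem_ne hX x
    obtain ⟨y, hy, hyv⟩ := exists_mem_ne hY v
    have := (colours_of_five_le_card h hXY hcard hx hx' hvY hy hx'x.symm hyv.symm).2.2
    simpa [hvX] using this.symm

end Colouring

namespace IsCompleteBipartite

theorem union_of_forall_pairs {P Q : Finset α} (h : IsCompleteBipartite E X Y) (hX : 2 ≤ #X)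
    (hY : 2 ≤ #Y) (hPQ : Disjoint P Q) (hd : Disjoint (P ∪ Q) (X ∪ Y))
    (hpairs : ∀ S ⊆ X, #S = 2 → ∀ T ⊆ Y, #T = 2 → IsCompleteBipartite E (P ∪ S) (Q ∪ T)) :
    IsCompleteBipartite E (P ∪ X) (Q ∪ Y) := by
  have hPY : Disjoint P Y := hd.mono subset_union_left subset_union_right
  have hXQ : Disjoint X Q := (hd.mono subset_union_right subset_union_left).symm
  refine ⟨disjoint_union_left.2 ⟨disjoint_union_right.2 ⟨hPQ, hPY⟩,
    disjoint_union_right.2 ⟨hXQ, h.disjoint⟩⟩, fun e he3 hes => ?_⟩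
  by_cases heXY : e ⊆ X ∪ Y
  · have heP : e ∩ P = ∅ := disjoint_iff_inter_eq_empty.1
      (hd.symm.mono heXY subset_union_left)
    have heQ : e ∩ Q = ∅ := disjoint_iff_inter_eq_empty.1
      (hd.symm.mono heXY subset_union_right)
    rw [h.mem_iff e he3 heXY, inter_union_distrib_left, inter_union_distrib_left, heP, heQ,
      empty_union, empty_union]
  · have card_inter_lt : #(e ∩ (X ∪ Y)) < 3 := he3 ▸ card_lt_card
      (ssubset_of_subset_of_ne inter_subset_left fun heq => heXY (inter_eq_left.1 heq))
    have inter_le : ∀ Z ⊆ X ∪ Y, #(e ∩ Z) ≤ 2 := fun Z hZ =>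
      (card_le_card (inter_subset_inter_left hZ)).trans (Nat.le_of_lt_succ card_inter_lt)
    obtain ⟨S, heS, hSX, hS⟩ := exists_subsuperset_card_eq inter_subset_right
      (inter_le X subset_union_left) hX
    obtain ⟨T, heT, hTY, hT⟩ := exists_subsuperset_card_eq inter_subset_right
      (inter_le Y subset_union_right) hY
    have inter_S : e ∩ S = e ∩ X := subset_antisymm (inter_subset_inter_left hSX)
      (subset_inter inter_subset_left heS)
    have inter_T : e ∩ T = e ∩ Y := subset_antisymm (inter_subset_inter_left hTY)
      (subset_inter inter_subset_left heT)
    have hes' : e ⊆ (P ∪ S) ∪ (Q ∪ T) := by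
      rw [← inter_eq_left] at hes ⊢
      simpa only [inter_union_distrib_left, inter_S, inter_T] using hes
    rw [(hpairs S hSX hS T hTY hT).mem_iff e he3 hes']
    simp only [inter_union_distrib_left, inter_S, inter_T]

theorem isTetrahedron_union {S T : Finset α} (h : IsCompleteBipartite E X Y) (hS : S ⊆ X)
    (hT : T ⊆ Y) (hS2 : #S = 2) (hT2 : #T = 2) : IsTetrahedron E (S ∪ T) := by
  have hSY : S ∩ Y = ∅ := disjoint_iff_inter_eq_empty.1 (h.disjoint.mono_left hS)
  have hTX : T ∩ X = ∅ := disjoint_iff_inter_eq_empty.1 (h.disjoint.symm.mono_left hT)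
  rw [h.isTetrahedron_iff (union_subset_union hS hT), union_inter_distrib_right,
    union_inter_distrib_right, inter_eq_left.2 hS, inter_eq_left.2 hT, hSY, hTX, union_empty,
    empty_union]
  exact ⟨hS2, hT2⟩

end IsCompleteBipartite

theorem filter_union_of_forall_iff_mem {p : α → Prop} [DecidablePred p] {S T : Finset α}
    (hXY : Disjoint X Y) (hp : ∀ v ∈ X ∪ Y, (p v ↔ v ∈ X)) (hS : S ⊆ X) (hT : T ⊆ Y) :
    {v ∈ S ∪ T | p v} = S ∧ {v ∈ S ∪ T | ¬ p v} = T := by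
  have pos_S : ∀ v ∈ S, p v := fun v hv => (hp v (mem_union_left Y (hS hv))).2 (hS hv)
  have neg_T : ∀ v ∈ T, ¬ p v := fun v hv hpv =>
    disjoint_right.1 hXY (hT hv) ((hp v (mem_union_right X (hT hv))).1 hpv)
  constructor
  · rw [filter_union, filter_true_of_mem pos_S, filter_false_of_mem neg_T, union_empty]
  · rw [filter_union, filter_false_of_mem (fun v hv => not_not.2 (pos_S v hv)),
      filter_true_of_mem neg_T, empty_union]

section Gluing

variable (h : IsCompleteBipartite E X Y) (hX : 2 ≤ #X) (hY : 2 ≤ #Y) (hcard : 5 ≤ #X + #Y)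
  (hK : IsTetrahedron E K) (hd : Disjoint K (X ∪ Y))
  (hsplit : ∀ L, IsTetrahedron E L → Disjoint K L →
    ∃ A B, IsCompleteBipartite E A B ∧ A ∪ B = K ∪ L)
include h hX hY hcard hK hd hsplit

theorem sameSide_eq_sameSide_iff_mem {x v : α} (hx : x ∈ X) (hv : v ∈ X ∪ Y) :
    sameSide E K v = sameSide E K x ↔ v ∈ X := by
  refine colour_eq_iff_mem (fun S hS hS2 T hT hT2 a ha => ?_) h.disjoint hX hY hcard hx hv
  have hL : IsTetrahedron E (S ∪ T) := h.isTetrahedron_union hS hT hS2 hT2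
  have hKL : Disjoint K (S ∪ T) := hd.mono_right (union_subset_union hS hT)
  exact (isCompleteBipartite_sameSide_union hK hL hKL (hsplit _ hL hKL) ha).2.1

theorem isCompleteBipartite_sameSide_union_of_mem {x : α} (hx : x ∈ X) {S T : Finset α}
    (hS : S ⊆ X) (hT : T ⊆ Y) (hS2 : #S = 2) (hT2 : #T = 2) :
    #(sameSide E K x) = 2 ∧
      IsCompleteBipartite E (sameSide E K x ∪ S) (K \ sameSide E K x ∪ T) := by
  have side_iff : ∀ v ∈ X ∪ Y, (sameSide E K v = sameSide E K x ↔ v ∈ X) := fun v hv =>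
    sameSide_eq_sameSide_iff_mem h hX hY hcard hK hd hsplit hx hv
  have hL : IsTetrahedron E (S ∪ T) := h.isTetrahedron_union hS hT hS2 hT2
  have hKL : Disjoint K (S ∪ T) := hd.mono_right (union_subset_union hS hT)
  obtain ⟨a, ha⟩ := card_pos.1 (hS2 ▸ two_pos)
  obtain ⟨hcard_side, -, hST⟩ := isCompleteBipartite_sameSide_union hK hL hKL (hsplit _ hL hKL)
    (mem_union_left T ha)
  obtain ⟨filter_eq, filter_ne⟩ := filter_union_of_forall_iff_mem h.disjoint side_iff hS hT
  rw [(side_iff a (mem_union_left Y (hS ha))).2 (hS ha)] at hcard_side hST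
  rw [filter_eq, filter_ne] at hST
  exact ⟨hcard_side, hST⟩

theorem exists_isCompleteBipartite_union_of_isTetrahedron :
    ∃ P ⊆ K, #P = 2 ∧ IsCompleteBipartite E (P ∪ X) (K \ P ∪ Y) := by
  obtain ⟨x, hx⟩ := card_pos.1 (two_pos.trans_le hX)
  have pairs : ∀ S ⊆ X, #S = 2 → ∀ T ⊆ Y, #T = 2 → _ := fun S hS hS2 T hT hT2 =>
    isCompleteBipartite_sameSide_union_of_mem h hX hY hcard hK hd hsplit hx hS hT hS2 hT2
  obtain ⟨S, hS, hS2⟩ := exists_subset_card_eq hX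
  obtain ⟨T, hT, hT2⟩ := exists_subset_card_eq hY
  have side_subset : sameSide E K x ⊆ K := filter_subset _ _
  refine ⟨sameSide E K x, side_subset, (pairs S hS hS2 T hT hT2).1, ?_⟩
  exact h.union_of_forall_pairs hX hY disjoint_sdiff (by rwa [union_sdiff_of_subset side_subset])
    fun S hS hS2 T hT hT2 => (pairs S hS hS2 T hT hT2).2

end Gluing

omit [DecidableEq α] in
theorem exists_isTetrahedron [Fintype α] (hα : 4 ≤ Fintype.card α) (h3 : ∀ e ∈ E, #e = 3)
    (hE : b (Fintype.card α) ≤ #E) : ∃ K, IsTetrahedron E K := by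
  have := three_mul_choose_three_lt_four_mul_b hα
  exact exists_forall_subset_mem_of_mul_choose_lt hα h3 (by omega)

theorem B_n_of_tetrahedra_general {α : Type*} [Fintype α] [DecidableEq α]
    {E : Finset (Finset α)} {K : Finset α}
    (h8 : ∀ F : Finset (Finset (Fin 8)), (∀ e ∈ F, #e = 3) → #F = b 8 → ¬ ContainsFano F →
      IsBalancedBipartiteOn F univ)
    (hα : 9 ≤ Fintype.card α) (h3 : ∀ e ∈ E, #e = 3) (hF : ¬ ContainsFano E)
    (hK : IsTetrahedron E K) (hout : IsBalancedBipartiteOn E Kᶜ)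
    (hdeg : ∀ L, IsTetrahedron E L → ∀ v ∉ L, #{e ∈ E | v ∈ e ∧ #(e ∩ L) = 2} = 5) :
    IsBalancedBipartiteOn E univ := by
  obtain ⟨X, Y, hXY, hu, hbal⟩ := hout
  have hd : Disjoint K (X ∪ Y) := hu ▸ disjoint_compl_right
  have hcard : #X + #Y = Fintype.card α - 4 := by
    rw [← card_union_of_disjoint hXY.disjoint, hu, card_compl, hK.1]
  obtain ⟨P, hPK, hP, hPXY⟩ := exists_isCompleteBipartite_union_of_isTetrahedron hXY (by omega)
    (by omega) (by omega) hK hd fun L => exists_isCompleteBipartite_union h8 h3 hF hdeg hK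
  refine ⟨P ∪ X, K \ P ∪ Y, hPXY, ?_, ?_⟩
  · rw [union_union_union_comm, union_sdiff_of_subset hPK, hu, union_compl]
  · have hPX : Disjoint P X := hd.mono hPK subset_union_left
    have hQY : Disjoint (K \ P) Y := hd.mono sdiff_subset subset_union_right
    rw [card_union_of_disjoint hPX, card_union_of_disjoint hQY, card_sdiff_of_subset hPK, hK.1, hP]
    push_cast
    simpa using hbal

end

/-- Assuming uniqueness of the extremal configuration on `8` vertices, an odd-order
extremal Fano-free hypergraph in which every tetrahedron behaves as described is
isomorphic to `B_n`. -/
theorem B_n_of_tetrahedra (h8 : ∀ E : Finset (Finset (Fin 8)),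
      (∀ e ∈ E, e.card = 3) → E.card = b 8 → ¬ ContainsFano E →
      ∃ X Y : Finset (Fin 8), Disjoint X Y ∧ X ∪ Y = Finset.univ ∧
        ((X.card : ℤ) - (Y.card : ℤ)).natAbs ≤ 1 ∧
        ∀ e : Finset (Fin 8), e.card = 3 →
          (e ∈ E ↔ (e ∩ X).Nonempty ∧ (e ∩ Y).Nonempty))
    (n : ℕ) (hn : 9 ≤ n) (hodd : Odd n) (E : Finset (Finset (Fin n)))
    (h3 : ∀ e ∈ E, e.card = 3) (hcard : E.card = b n) (hF : ¬ ContainsFano E)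
    (htetra : ∀ K : Finset (Fin n), K.card = 4 → (∀ e ⊆ K, e.card = 3 → e ∈ E) →
      (∃ X Y : Finset (Fin n), Disjoint X Y ∧ X ∪ Y = Finset.univ \ K ∧
        ((X.card : ℤ) - (Y.card : ℤ)).natAbs ≤ 1 ∧
        ∀ e : Finset (Fin n), e.card = 3 → e ⊆ Finset.univ \ K →
          (e ∈ E ↔ (e ∩ X).Nonempty ∧ (e ∩ Y).Nonempty)) ∧
      (∀ v : Fin n, v ∉ K →
        (E.filter (fun e => v ∈ e ∧ (e ∩ K).card = 2)).card = 5)) :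
    ∃ X Y : Finset (Fin n), Disjoint X Y ∧ X ∪ Y = Finset.univ ∧
      ((X.card : ℤ) - (Y.card : ℤ)).natAbs ≤ 1 ∧
      ∀ e : Finset (Fin n), e.card = 3 →
        (e ∈ E ↔ (e ∩ X).Nonempty ∧ (e ∩ Y).Nonempty) := by
  simp only [← isBalancedBipartiteOn_univ, ← isBalancedBipartiteOn_iff] at h8 htetra ⊢
  obtain ⟨K, hK⟩ := exists_isTetrahedron (by rw [Fintype.card_fin]; omega) h3 (by simp [hcard])
  exact B_n_of_tetrahedra_general h8 (by simpa using hn) h3 hF hK (htetra K hK.1 hK.2).1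
    fun L hL => (htetra L hL.1 hL.2).2
end

section
/- Let (G_1, …, G_5) be a 5-multigraph on four vertices not containing three crossing pairs, with total number of edges e ≥ 22. Then there exist two distinct vertices u and v whose pair uv has multiplicity exactly 5, i.e., uv is an edge of every G_i for i = 1, …, 5. -/
/-- A `p`-multigraph `G` (a `p`-tuple of simple graphs on a common vertex set) contains
three crossing pairs if there are three distinct indices `i, j, k` and four distinct
vertices `w, x, y, z` with `wx, yz ∈ G i`, `wy, xz ∈ G j`, and `wz, xy ∈ G k`. -/
def HasThreeCrossingPairs {p : ℕ} {V : Type*} (G : Fin p → SimpleGraph V) : Prop :=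
  ∃ i j k : Fin p, i ≠ j ∧ i ≠ k ∧ j ≠ k ∧
    ∃ w x y z : V, w ≠ x ∧ w ≠ y ∧ w ≠ z ∧ x ≠ y ∧ x ≠ z ∧ y ≠ z ∧
      (G i).Adj w x ∧ (G i).Adj y z ∧
      (G j).Adj w y ∧ (G j).Adj x z ∧
      (G k).Adj w z ∧ (G k).Adj x y

/-!
If no pair has multiplicity `p`, each of the six pairs of vertices misses at least one of the `p`
indices, while a total of at least `5 * p - 3` edges means that at most `p + 3` indices are missed
altogether. Hence the two edges of any perfect matching miss at most `p - 1` indices and so share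
one; similarly, some matching among any two has two common indices, and, as `5 ≤ p`, some matching
has three. By Hall's theorem the three matchings have distinct common indices, which are three
crossing pairs.
-/

open Finset

lemma exists_injective_mem_of_exists_card_le {ι α : Type*} (t : ι → Finset α)
    (h : ∀ s : Finset ι, s.Nonempty → ∃ i ∈ s, #s ≤ #(t i)) :
    ∃ f : ι → α, Function.Injective f ∧ ∀ i, f i ∈ t i := by
  classical
  refine (all_card_le_biUnion_card_iff_exists_injective t).1 fun s ↦ ?_
  obtain rfl | hs := s.eq_empty_or_nonempty
  · simp
  · obtain ⟨i, hi, hsi⟩ := h s hs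
    exact hsi.trans (card_le_card (subset_biUnion_of_mem t hi))

lemma exists_distinct_mem_of_card_le {α : Type*} {A B C : Finset α}
    (hA : 1 ≤ #A) (hB : 1 ≤ #B) (hC : 1 ≤ #C)
    (hAB : 2 ≤ #A ∨ 2 ≤ #B) (hAC : 2 ≤ #A ∨ 2 ≤ #C) (hBC : 2 ≤ #B ∨ 2 ≤ #C)
    (hABC : 3 ≤ #A ∨ 3 ≤ #B ∨ 3 ≤ #C) :
    ∃ a ∈ A, ∃ b ∈ B, ∃ c ∈ C, a ≠ b ∧ a ≠ c ∧ b ≠ c := by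
  have exists_card_le (s : Finset (Fin 3)) (hs : s.Nonempty) :
      ∃ i ∈ s, #s ≤ #(![A, B, C] i) := by
    fin_cases s <;> simp_all
  obtain ⟨f, hf, hmem⟩ := exists_injective_mem_of_exists_card_le ![A, B, C] exists_card_le
  exact ⟨f 0, hmem 0, f 1, hmem 1, f 2, hmem 2, hf.ne (by decide), hf.ne (by decide),
    hf.ne (by decide)⟩

lemma card_add_card_le_card_inter_add_card_univ {α : Type*} [Fintype α] [DecidableEq α]
    (A B : Finset α) : #A + #B ≤ #(A ∩ B) + Fintype.card α := by
  rw [← card_inter_add_card_union]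
  exact Nat.add_le_add_left (card_le_univ _) _

lemma sum_edgeFinset_top_of_equiv_fin_four {V M : Type*} [Fintype V] [DecidableEq V]
    [AddCommMonoid M] (e : Fin 4 ≃ V) (f : Sym2 V → M) :
    ∑ a ∈ (⊤ : SimpleGraph V).edgeFinset, f a =
      f s(e 0, e 1) + f s(e 2, e 3) + f s(e 0, e 2) + f s(e 1, e 3) + f s(e 0, e 3) +
        f s(e 1, e 2) := by
  have edgeFinset_top_fin_four : (⊤ : SimpleGraph (Fin 4)).edgeFinset =
      {s(0, 1), s(2, 3), s(0, 2), s(1, 3), s(0, 3), s(1, 2)} := by decide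
  calc ∑ a ∈ (⊤ : SimpleGraph V).edgeFinset, f a
      = ∑ a ∈ (⊤ : SimpleGraph (Fin 4)).edgeFinset, f (a.map e) :=
        sum_nbij' (Sym2.map e.symm) (Sym2.map e)
          (by simp [Sym2.isDiag_map e.symm.injective]) (by simp [Sym2.isDiag_map e.injective])
          (by simp [Sym2.map_map]) (by simp [Sym2.map_map]) (by simp [Sym2.map_map])
    _ = _ := by simp [edgeFinset_top_fin_four, add_assoc]

section EdgeColors

variable {ι V : Type*} [Fintype ι]

open Classical in
/-- The set of indices `i` such that `e` is an edge of `G i`; its cardinality is the multiplicity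
of `e` in the multigraph `G`. -/
noncomputable def edgeColors (G : ι → SimpleGraph V) (e : Sym2 V) : Finset ι :=
  {i | e ∈ (G i).edgeSet}

lemma mem_edgeColors {G : ι → SimpleGraph V} {u v : V} {i : ι} :
    i ∈ edgeColors G s(u, v) ↔ (G i).Adj u v := by
  simp [edgeColors]

lemma sum_ncard_edgeSet_eq_sum_card_edgeColors [Fintype V] [DecidableEq V]
    (G : ι → SimpleGraph V) :
    ∑ i, (G i).edgeSet.ncard = ∑ e ∈ (⊤ : SimpleGraph V).edgeFinset, #(edgeColors G e) := by
  classical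
  calc ∑ i, (G i).edgeSet.ncard
      = ∑ i, #{e ∈ (⊤ : SimpleGraph V).edgeFinset | e ∈ (G i).edgeSet} := by
        refine sum_congr rfl fun i _ ↦ ?_
        have hsub : (G i).edgeSet ⊆ (⊤ : SimpleGraph V).edgeSet :=
          SimpleGraph.edgeSet_mono le_top
        rw [← Set.ncard_coe_finset, coe_filter]
        simp only [SimpleGraph.mem_edgeFinset]
        exact congrArg Set.ncard (Set.inter_eq_right.2 hsub).symm
    _ = ∑ e ∈ (⊤ : SimpleGraph V).edgeFinset, #(edgeColors G e) :=
        sum_card_bipartiteAbove_eq_sum_card_bipartiteBelow _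

end EdgeColors

lemma hasThreeCrossingPairs_of_lt_of_le_sum {p : ℕ} {V : Type*} {G : Fin p → SimpleGraph V}
    (hp : 5 ≤ p) {w x y z : V} (hwx : w ≠ x) (hwy : w ≠ y) (hwz : w ≠ z) (hxy : x ≠ y)
    (hxz : x ≠ z) (hyz : y ≠ z) (hlt : ∀ u v, u ≠ v → #(edgeColors G s(u, v)) < p)
    (hsum : 5 * p - 3 ≤ #(edgeColors G s(w, x)) + #(edgeColors G s(y, z)) +
      #(edgeColors G s(w, y)) + #(edgeColors G s(x, z)) +
      #(edgeColors G s(w, z)) + #(edgeColors G s(x, y))) :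
    HasThreeCrossingPairs G := by
  have card_inter (e f : Sym2 V) : #(edgeColors G e) + #(edgeColors G f) ≤
      #(edgeColors G e ∩ edgeColors G f) + p := by
    simpa only [Fintype.card_fin] using
      card_add_card_le_card_inter_add_card_univ (edgeColors G e) (edgeColors G f)
  have := hlt _ _ hwx
  have := hlt _ _ hwy
  have := hlt _ _ hwz
  have := hlt _ _ hxy
  have := hlt _ _ hxz
  have := hlt _ _ hyz
  have := card_inter s(w, x) s(y, z)
  have := card_inter s(w, y) s(x, z)
  have := card_inter s(w, z) s(x, y)
  obtain ⟨i, hi, j, hj, k, hk, hij, hik, hjk⟩ := exists_distinct_mem_of_card_le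
    (A := edgeColors G s(w, x) ∩ edgeColors G s(y, z))
    (B := edgeColors G s(w, y) ∩ edgeColors G s(x, z))
    (C := edgeColors G s(w, z) ∩ edgeColors G s(x, y))
    (by omega) (by omega) (by omega) (by omega) (by omega) (by omega) (by omega)
  simp only [mem_inter, mem_edgeColors] at hi hj hk
  exact ⟨i, j, k, hij, hik, hjk, w, x, y, z, hwx, hwy, hwz, hxy, hxz, hyz,
    hi.1, hi.2, hj.1, hj.2, hk.1, hk.2⟩

theorem five_multigraph_four_vertices_22_general {p : ℕ} (hp : 5 ≤ p) {V : Type*} [Fintype V]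
    (hV : Fintype.card V = 4) (G : Fin p → SimpleGraph V) (hG : ¬ HasThreeCrossingPairs G)
    (he : 5 * p - 3 ≤ ∑ i, (G i).edgeSet.ncard) :
    ∃ u v : V, u ≠ v ∧ ∀ i : Fin p, (G i).Adj u v := by
  classical
  by_contra! hmissing
  have hlt (u v) (huv : u ≠ v) : #(edgeColors G s(u, v)) < p := by
    obtain ⟨i, hi⟩ := hmissing u v huv
    simpa using card_lt_univ_of_notMem (mt mem_edgeColors.1 hi)
  let e : Fin 4 ≃ V := (Fintype.equivFinOfCardEq hV).symm
  rw [sum_ncard_edgeSet_eq_sum_card_edgeColors, sum_edgeFinset_top_of_equiv_fin_four e] at he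
  refine hG (hasThreeCrossingPairs_of_lt_of_le_sum hp ?_ ?_ ?_ ?_ ?_ ?_ hlt he) <;>
    exact e.injective.ne (by decide)

/-- In a `5`-multigraph on four vertices without three crossing pairs and with at least
`22` edges in total, some pair of distinct vertices has multiplicity `5`. -/
theorem five_multigraph_four_vertices_22 (G : Fin 5 → SimpleGraph (Fin 4))
    (hG : ¬ HasThreeCrossingPairs G) (he : 22 ≤ ∑ i, (G i).edgeSet.ncard) :
    ∃ u v : Fin 4, u ≠ v ∧ ∀ i : Fin 5, (G i).Adj u v :=
  five_multigraph_four_vertices_22_general le_rfl (Fintype.card_fin 4) G hG he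
end
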